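/- Let d ≥ 1 be an integer, σ > 0 and p > 0. Let w > 0 be the unique positive real with w·e^{w} = (d+1)/(pσ²), and set t₀ := (2(d+1)·4^{p/(d+1)}/(e·p·w))·exp(1/w). Then for all 0 < ε ≤ 1 one has ln N(ε, U_σ(B_2^d)) ≤ binom(t₀+d, d) · ((d+1)/(e·p)) · 4^{p/(d+1)} · ε^{−p}. -/

import Mathlib

/-!
Write `q = p / (d + 1)` and `t = t₀ ε^{-q}`, and let `m = ⌊t⌋`. On the Euclidean unit ball, the
multinomial theorem gives `∑_{|k| ≥ n} e_k(x)² = e^{-s} ∑_{j ≥ n} s^j / j! ≤ (2σ²)^n / n!` with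
`s = 2σ²‖x‖²` (`sum_ek_sq_le`). By Cauchy–Schwarz, dropping the terms with `|k| > m` from a function
of the unit ball changes it by at most `((2σ²)^{m+1} / (m+1)!)^{1/2}` in sup norm
(`exists_truncation`), and the case `n = 0` shows that the sup norm of a truncated sum is at most
the Euclidean norm of its coefficient vector (`abs_lowDegreeSum_le`).

The coefficient vectors of the truncations lie in the unit ball of a Euclidean space of dimension
`binom(m + d, d)`, which a volume argument covers by `(1 + 2 / r)^{binom(m + d, d)}` balls of radius
`r` (`exists_unitBall_cover`). The radius `r = 3ε/4` leaves `ε/4` for the truncation error; since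
`r ≤ 1`, the base satisfies `1 + 2 / r ≤ 3 / r = 4 / ε`.

The equation for `w` amounts to `2eσ² = t e^{-A}` with `A = w + 1/w - 2 + q log (4/ε) ≥ 0`. Together
with `n! ≥ (n/e)^n` it gives `(2σ²)^n / n! ≤ e^{-nA} ≤ e^{-tA}` for `n ≥ t`, and `tA ≥ 2 log (4/ε)`
reduces to the elementary `key_ineq`, so the truncation error is at most `ε/4` (`tail_le`).

Therefore `log N ≤ binom(t + d, d) log (4/ε)`. The claim follows from
`log y ≤ y^q / (e q)` at `y = 4/ε` (`log_le_rpow`) and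
`binom(t₀ ε^{-q} + d, d) ≤ binom(t₀ + d, d) ε^{-qd}` (`gbinom_mul_le`).
-/

open Real Filter MeasureTheory

/-- Generalized binomial coefficient `binom(t+d, d) = (1/d!) ∏_{i=1}^d (t+i)`. -/
noncomputable def gbinom (t : ℝ) (d : ℕ) : ℝ :=
  (∏ i ∈ Finset.range d, (t + (i : ℝ) + 1)) / (Nat.factorial d : ℝ)

/-- Covering number of a set of real-valued functions w.r.t. the sup distance,
by bounded functions. -/
noncomputable def covN {α : Type*} (ε : ℝ) (A : Set (α → ℝ)) : ℕ :=
  sInf {n : ℕ | ∃ g : Fin n → (α → ℝ),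
    (∀ i, ∃ C : ℝ, ∀ y, |g i y| ≤ C) ∧
    ∀ f ∈ A, ∃ i, ∀ y, |f y - g i y| ≤ ε}

/-- The functions `e_k^σ` forming an ONB of the Gaussian RKHS. -/
noncomputable def ek (d : ℕ) (σ : ℝ) (k : Fin d → ℕ) (x : EuclideanSpace ℝ (Fin d)) : ℝ :=
  Real.sqrt ((2 * σ ^ 2) ^ (∑ i, k i) / ∏ i, (Nat.factorial (k i) : ℝ)) *
    (∏ i, x i ^ k i) * Real.exp (-σ ^ 2 * ‖x‖ ^ 2)

/-- The image `U_σ(Y)` of the closed unit ball of the Gaussian RKHS on `Y`. -/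
noncomputable def UBall (d : ℕ) (σ : ℝ) (Y : Set (EuclideanSpace ℝ (Fin d))) :
    Set (Y → ℝ) :=
  {f | ∃ a : (Fin d → ℕ) → ℝ,
    Summable (fun k => a k ^ 2) ∧ (∑' k, a k ^ 2) ≤ 1 ∧
    (∀ x : Y, Summable (fun k => |a k * ek d σ k ↑x|)) ∧
    (∀ x : Y, f x = ∑' k, a k * ek d σ k ↑x)}

/-- The closed Euclidean unit ball of `ℝ^d`. -/
def B2 (d : ℕ) : Set (EuclideanSpace ℝ (Fin d)) := Metric.closedBall 0 1

/-! ### Covering the unit ball of a finite-dimensional space -/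

/-- The balls of radius `r / 2` about the points of `s` are disjoint and lie in the ball of radius
`1 + r / 2`; compare volumes. -/
lemma card_le_of_separated_unitBall {E : Type*} [NormedAddCommGroup E] [NormedSpace ℝ E]
    [FiniteDimensional ℝ E] {r : ℝ} (hr : 0 < r) (s : Finset E) (hs : ∀ c ∈ s, ‖c‖ ≤ 1)
    (h : ∀ c ∈ s, ∀ c' ∈ s, c ≠ c' → r ≤ ‖c - c'‖) :
    (s.card : ℝ) ≤ (1 + 2 / r) ^ Module.finrank ℝ E := by
  borelize E
  let μ : Measure E := Measure.addHaar
  have hδ : 0 < r / 2 := by positivity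
  have hρ : 0 < 1 + r / 2 := by positivity
  have hD : Set.Pairwise (s : Set E) (Function.onFun Disjoint fun c => Metric.ball c (r / 2)) := by
    rintro c hc c' hc' hcc
    apply Metric.ball_disjoint_ball
    rw [dist_eq_norm]
    linarith [h c hc c' hc' hcc]
  have hsub : (⋃ c ∈ s, Metric.ball c (r / 2)) ⊆ Metric.ball (0 : E) (1 + r / 2) := by
    refine Set.iUnion₂_subset fun x hx => Metric.ball_subset_ball' ?_
    rw [dist_zero_right]
    linarith [hs x hx]
  have I : (s.card : ENNReal) * ENNReal.ofReal ((r / 2) ^ Module.finrank ℝ E) *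
      μ (Metric.ball 0 1) ≤
      ENNReal.ofReal ((1 + r / 2) ^ Module.finrank ℝ E) * μ (Metric.ball 0 1) :=
    calc
      _ = μ (⋃ c ∈ s, Metric.ball c (r / 2)) := by
        rw [measure_biUnion_finset hD fun c _ => measurableSet_ball]
        simp only [μ.addHaar_ball_of_pos _ hδ]
        simp only [Finset.sum_const, nsmul_eq_mul, mul_assoc]
      _ ≤ μ (Metric.ball (0 : E) (1 + r / 2)) := measure_mono hsub
      _ = _ := by rw [μ.addHaar_ball_of_pos _ hρ]
  have J := (ENNReal.mul_le_mul_iff_left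
    (Metric.measure_ball_pos μ _ zero_lt_one).ne' measure_ball_lt_top.ne).1 I
  have K := ENNReal.toReal_le_of_le_ofReal (pow_nonneg hρ.le _) J
  rw [ENNReal.toReal_mul, ENNReal.toReal_natCast, ENNReal.toReal_ofReal (by positivity)] at K
  have e : 1 + 2 / r = (1 + r / 2) / (r / 2) := by field_simp; ring
  rw [e, div_pow, le_div_iff₀ (by positivity)]
  exact K

lemma exists_unitBall_cover (E : Type*) [NormedAddCommGroup E] [NormedSpace ℝ E]
    [FiniteDimensional ℝ E] {r : ℝ} (hr : 0 < r) :
    ∃ s : Finset E, (s.card : ℝ) ≤ (1 + 2 / r) ^ Module.finrank ℝ E ∧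
      ∀ c : E, ‖c‖ ≤ 1 → ∃ b ∈ s, ‖c - b‖ ≤ r := by
  classical
  let P : ℕ → Prop := fun m => ∃ s : Finset E, s.card = m ∧ (∀ c ∈ s, ‖c‖ ≤ 1) ∧
    ∀ c ∈ s, ∀ c' ∈ s, c ≠ c' → r ≤ ‖c - c'‖
  have hbd : ∀ m, P m → m ≤ ⌊(1 + 2 / r) ^ Module.finrank ℝ E⌋₊ := by
    rintro m ⟨s, rfl, h1, h2⟩
    exact Nat.le_floor (card_le_of_separated_unitBall hr s h1 h2)
  have h0 : P 0 := ⟨∅, by simp⟩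
  obtain ⟨s, hcard, h1, h2⟩ := Nat.findGreatest_spec (hbd 0 h0) h0
  refine ⟨s, card_le_of_separated_unitBall hr s h1 h2, fun c hc => ?_⟩
  -- A point farther than `r` from every point of `s` could be added to `s`.
  by_contra! hfar
  have hcs : c ∉ s := fun hmem => by
    have := hfar c hmem
    rw [sub_self, norm_zero] at this
    linarith
  have hP : P (s.card + 1) := by
    refine ⟨insert c s, Finset.card_insert_of_notMem hcs, ?_, ?_⟩
    · intro b hb
      rcases Finset.mem_insert.1 hb with rfl | hb
      exacts [hc, h1 b hb]
    · intro b hb b' hb' hne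
      rcases Finset.mem_insert.1 hb with hbc | hb <;> rcases Finset.mem_insert.1 hb' with hbc' | hb'
      · exact absurd (hbc.trans hbc'.symm) hne
      · rw [hbc]; exact (hfar b' hb').le
      · rw [hbc', norm_sub_rev]; exact (hfar b hb).le
      · exact h2 b hb b' hb' hne
  have := Nat.le_findGreatest (hbd _ hP) hP
  omega

/-! ### Sums of squares of the basis functions and counting multi-indices -/

/-- By the multinomial theorem, the squares of the `e_k^σ(x)` with `|k| = m` add up to the Poisson
weight `e^{-s} s^m / m!` with `s = 2σ²‖x‖²`. -/
lemma sum_piAntidiag_ek_sq (d : ℕ) (σ : ℝ) (m : ℕ) (x : EuclideanSpace ℝ (Fin d)) :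
    ∑ k ∈ Finset.piAntidiag Finset.univ m, ek d σ k x ^ 2 =
      Real.exp (-(2 * σ ^ 2 * ‖x‖ ^ 2)) * ((2 * σ ^ 2 * ‖x‖ ^ 2) ^ m / (m.factorial : ℝ)) := by
  have hmain : (2 * σ ^ 2 * ‖x‖ ^ 2) ^ m / (m.factorial : ℝ) =
      ∑ k ∈ Finset.piAntidiag (Finset.univ : Finset (Fin d)) m,
        (2 * σ ^ 2) ^ m / (∏ i, ((k i).factorial : ℝ)) * ∏ i, (x i ^ 2) ^ k i := by
    rw [EuclideanSpace.real_norm_sq_eq, mul_pow, Finset.sum_pow_eq_sum_piAntidiag, Finset.mul_sum,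
      Finset.sum_div]
    refine Finset.sum_congr rfl fun k hk => ?_
    have hk' : ∑ i, k i = m := (Finset.mem_piAntidiag.1 hk).1
    have hspec := Nat.multinomial_spec (Finset.univ : Finset (Fin d)) k
    rw [hk'] at hspec
    have hspec' : (∏ i, ((k i).factorial : ℝ)) * (Nat.multinomial Finset.univ k : ℝ) =
        (m.factorial : ℝ) := by exact_mod_cast hspec
    have hpos : (0 : ℝ) < ∏ i, ((k i).factorial : ℝ) :=
      Finset.prod_pos fun i _ => by positivity
    have hm : (0 : ℝ) < m.factorial := by positivity
    rw [div_mul_eq_mul_div, div_eq_div_iff hm.ne' hpos.ne', ← hspec']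
    ring
  rw [hmain, Finset.mul_sum]
  refine Finset.sum_congr rfl fun k hk => ?_
  have hk' : ∑ i, k i = m := (Finset.mem_piAntidiag.1 hk).1
  have hexp : Real.exp (-(2 * σ ^ 2 * ‖x‖ ^ 2)) = Real.exp (-σ ^ 2 * ‖x‖ ^ 2) ^ 2 := by
    rw [← Real.exp_nat_mul]; congr 1; push_cast; ring
  have hprod : ∏ i, (x i ^ 2) ^ k i = (∏ i, x i ^ k i) ^ 2 := by
    rw [← Finset.prod_pow]
    exact Finset.prod_congr rfl fun i _ => by ring
  rw [ek, mul_pow, mul_pow, Real.sq_sqrt (by positivity), hk', hexp, hprod]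
  ring

/-- The tail of a Poisson distribution; it follows from `n! j! ≤ (n + j)!`. -/
lemma exp_neg_mul_sum_Ico_le {s : ℝ} (hs : 0 ≤ s) (n M : ℕ) :
    Real.exp (-s) * ∑ m ∈ Finset.Ico n M, s ^ m / (m.factorial : ℝ) ≤
      s ^ n / (n.factorial : ℝ) := by
  have h1 : ∑ m ∈ Finset.Ico n M, s ^ m / (m.factorial : ℝ) ≤
      s ^ n / (n.factorial : ℝ) * Real.exp s := by
    rw [Finset.sum_Ico_eq_sum_range]
    calc _ ≤ ∑ j ∈ Finset.range (M - n),
          s ^ n / (n.factorial : ℝ) * (s ^ j / (j.factorial : ℝ)) := by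
          refine Finset.sum_le_sum fun j _ => ?_
          rw [pow_add, div_mul_div_comm]
          have : ((n.factorial : ℝ) * j.factorial) ≤ (n + j).factorial := by
            exact_mod_cast Nat.le_of_dvd (Nat.factorial_pos _)
              (Nat.factorial_mul_factorial_dvd_factorial_add n j)
          gcongr
      _ ≤ _ := by
          rw [← Finset.mul_sum]
          gcongr
          exact Real.sum_le_exp_of_nonneg hs _
  calc _ ≤ Real.exp (-s) * (s ^ n / (n.factorial : ℝ) * Real.exp s) := by gcongr
    _ = (Real.exp (-s) * Real.exp s) * (s ^ n / (n.factorial : ℝ)) := by ring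
    _ = _ := by rw [← Real.exp_add]; simp

lemma sum_ek_sq_le (d : ℕ) (σ : ℝ) (n : ℕ) (F : Finset (Fin d → ℕ))
    (hF : ∀ k ∈ F, n ≤ ∑ i, k i) (x : EuclideanSpace ℝ (Fin d)) (hx : ‖x‖ ≤ 1) :
    ∑ k ∈ F, ek d σ k x ^ 2 ≤ (2 * σ ^ 2) ^ n / (n.factorial : ℝ) := by
  classical
  set M := F.sup (fun k => ∑ i, k i) + 1 with hM
  have hdisj : Set.PairwiseDisjoint (↑(Finset.Ico n M) : Set ℕ)
      (fun m => Finset.piAntidiag (Finset.univ : Finset (Fin d)) m) := by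
    intro a _ b _ hab
    refine Finset.disjoint_left.2 fun k hka hkb => hab ?_
    rw [← (Finset.mem_piAntidiag.1 hka).1, (Finset.mem_piAntidiag.1 hkb).1]
  have hsub : F ⊆ (Finset.Ico n M).biUnion
      (fun m => Finset.piAntidiag (Finset.univ : Finset (Fin d)) m) := by
    intro k hk
    refine Finset.mem_biUnion.2 ⟨∑ i, k i, Finset.mem_Ico.2 ⟨hF k hk, ?_⟩, by simp⟩
    exact Nat.lt_succ_of_le (Finset.le_sup (f := fun k : Fin d → ℕ => ∑ i, k i) hk)
  calc ∑ k ∈ F, ek d σ k x ^ 2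
      ≤ ∑ k ∈ (Finset.Ico n M).biUnion
          (fun m => Finset.piAntidiag (Finset.univ : Finset (Fin d)) m), ek d σ k x ^ 2 :=
        Finset.sum_le_sum_of_subset_of_nonneg hsub fun _ _ _ => sq_nonneg _
    _ = Real.exp (-(2 * σ ^ 2 * ‖x‖ ^ 2)) *
          ∑ m ∈ Finset.Ico n M, (2 * σ ^ 2 * ‖x‖ ^ 2) ^ m / (m.factorial : ℝ) := by
        rw [Finset.sum_biUnion hdisj, Finset.mul_sum]
        exact Finset.sum_congr rfl fun m _ => sum_piAntidiag_ek_sq d σ m x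
    _ ≤ (2 * σ ^ 2 * ‖x‖ ^ 2) ^ n / (n.factorial : ℝ) :=
        exp_neg_mul_sum_Ico_le (by positivity) n M
    _ ≤ _ := by
        have : ‖x‖ ^ 2 ≤ 1 := pow_le_one₀ (norm_nonneg x) hx
        have h2 : 2 * σ ^ 2 * ‖x‖ ^ 2 ≤ 2 * σ ^ 2 := mul_le_of_le_one_right (by positivity) this
        exact div_le_div_of_nonneg_right (pow_le_pow_left₀ (by positivity) h2 n) (by positivity)

/-- The multi-indices `k` with `|k| ≤ m`. -/
def lowDegree (d m : ℕ) : Finset (Fin d → ℕ) :=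
  (Finset.range (m + 1)).biUnion fun j => Finset.piAntidiag Finset.univ j

lemma mem_lowDegree {d m : ℕ} {k : Fin d → ℕ} : k ∈ lowDegree d m ↔ ∑ i, k i ≤ m := by
  simp [lowDegree]

lemma card_lowDegree_le (d m : ℕ) : (lowDegree d m).card ≤ (m + d).choose d := by
  refine Finset.card_biUnion_le.trans (le_of_eq ?_)
  rw [← Nat.sum_range_multichoose]
  refine Finset.sum_congr rfl fun j _ => ?_
  rw [← Finset.map_sym_eq_piAntidiag, Finset.card_map, Finset.sym_univ, Finset.card_univ,
    Sym.card_sym_eq_multichoose, Fintype.card_fin]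

/-! ### Generalized binomial coefficients and the choice of the truncation degree -/

lemma gbinom_natCast (m d : ℕ) : gbinom (m : ℝ) d = ((m + d).choose d : ℝ) := by
  have h := Nat.ascFactorial_eq_factorial_mul_choose m d
  rw [Nat.ascFactorial_eq_prod_range] at h
  have h' : (∏ i ∈ Finset.range d, ((m : ℝ) + (i : ℝ) + 1)) =
      (d.factorial : ℝ) * ((m + d).choose d : ℝ) := by
    rw [← Nat.cast_mul, ← h, Nat.cast_prod]
    exact Finset.prod_congr rfl fun i _ => by push_cast; ring
  rw [gbinom, h', mul_div_cancel_left₀ _ (by positivity)]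

lemma gbinom_mono {s t : ℝ} (hs : 0 ≤ s) (hst : s ≤ t) (d : ℕ) : gbinom s d ≤ gbinom t d := by
  unfold gbinom
  gcongr

lemma gbinom_mul_le {t c : ℝ} (hc : 1 ≤ c) (ht : 0 ≤ t) (d : ℕ) :
    gbinom (t * c) d ≤ gbinom t d * c ^ d := by
  unfold gbinom
  rw [div_mul_eq_mul_div]
  gcongr
  calc _ ≤ ∏ i ∈ Finset.range d, (t + (i : ℝ) + 1) * c := by
        refine Finset.prod_le_prod (fun i _ => by positivity) fun i _ => ?_
        nlinarith [mul_nonneg (Nat.cast_nonneg (α := ℝ) i) (sub_nonneg.2 hc)]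
    _ = _ := by rw [Finset.prod_mul_distrib]; simp

/-- With `u = 1/w - 1 + x`, using `e^u ≥ 1 + u`, the difference of the two sides is at least
`(1 + u)(u + w - 1) - (wu + w - 1) = u²`. -/
lemma key_ineq {w x : ℝ} (hw : 0 < w) (hx : 0 ≤ x) :
    w * x ≤ Real.exp (1 / w - 1 + x) * (w + 1 / w - 2 + x) := by
  have hv : 0 < 1 / w := by positivity
  have hwv : w * (1 / w) = 1 := by field_simp
  set v := 1 / w
  have h0 : 0 ≤ w + v - 2 + x := by nlinarith [sq_nonneg (w - 1), sq_nonneg (v - 1), sq_nonneg (w - v)]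
  have h1 : v + x ≤ Real.exp (v - 1 + x) := by linarith [Real.add_one_le_exp (v - 1 + x)]
  calc w * x ≤ (v + x) * (w + v - 2 + x) := by nlinarith [sq_nonneg (v - 1 + x)]
    _ ≤ _ := by gcongr

/-- As soon as `n ≥ t = t₀ ε^{-q}`, the functions `e_k^σ` with `|k| ≥ n` contribute at most `ε / 4`
to a function of the RKHS unit ball. -/
lemma tail_le {σ q w ε t : ℝ} (hσ : 0 < σ) (hq : 0 < q) (hw : 0 < w)
    (hwq : w * Real.exp w = 1 / (q * σ ^ 2)) (hε : 0 < ε) (hε1 : ε ≤ 1)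
    (ht : t = 2 / (q * w) * Real.exp (1 / w - 1) * (4 / ε) ^ q)
    (n : ℕ) (hn : t ≤ n) :
    (2 * σ ^ 2) ^ n / (n.factorial : ℝ) ≤ (ε / 4) ^ 2 := by
  set L := Real.log (4 / ε) with hL
  have h4 : 1 ≤ 4 / ε := by rw [le_div_iff₀ hε]; linarith
  have hL0 : 0 ≤ L := Real.log_nonneg h4
  have hx : 0 ≤ q * L := by positivity
  have hpow : (4 / ε) ^ q = Real.exp (q * L) := by
    rw [Real.rpow_def_of_pos (by positivity), mul_comm]
  have ht' : t = 2 / (q * w) * Real.exp (1 / w - 1 + q * L) := by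
    rw [ht, hpow, Real.exp_add, mul_assoc]
  have ht0 : 0 < t := by rw [ht']; positivity
  have hn0 : (0 : ℝ) < n := ht0.trans_le hn
  set A := w + 1 / w - 2 + q * L with hA
  have hA0 : 0 ≤ A := by
    have hwv : w * (1 / w) = 1 := by field_simp
    have : 0 < 1 / w := by positivity
    nlinarith [sq_nonneg (w - 1 / w), sq_nonneg (w - 1), sq_nonneg (1 / w - 1)]
  have hσ2 : σ ^ 2 = Real.exp (-w) / (q * w) := by
    rw [Real.exp_neg]
    field_simp at hwq ⊢
    linarith
  -- `2 e σ² = t e^{-A}`, which is where the equation defining `w` enters.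
  have hσt : 2 * σ ^ 2 * Real.exp 1 = t * Real.exp (-A) := by
    rw [hσ2, ht', mul_assoc (2 / (q * w)), ← Real.exp_add, mul_assoc, div_mul_eq_mul_div,
      ← Real.exp_add, hA]
    have : 1 / w - 1 + q * L + -(w + 1 / w - 2 + q * L) = -w + 1 := by ring
    rw [this]
    ring
  have htA : 2 * L ≤ t * A := by
    have h := key_ineq hw hx
    have : 2 * L = 2 / (q * w) * (w * (q * L)) := by field_simp
    rw [this, ht', mul_assoc]
    gcongr
  have hfact : (n : ℝ) ^ n / (n.factorial : ℝ) ≤ Real.exp n :=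
    Real.pow_div_factorial_le_exp _ hn0.le n
  calc (2 * σ ^ 2) ^ n / (n.factorial : ℝ)
      = (2 * σ ^ 2 / n) ^ n * ((n : ℝ) ^ n / (n.factorial : ℝ)) := by
        rw [div_pow]; field_simp
    _ ≤ (2 * σ ^ 2 / n) ^ n * Real.exp n := by gcongr
    _ = (2 * σ ^ 2 * Real.exp 1 / n) ^ n := by
        rw [← Real.exp_one_pow, ← mul_pow]; congr 1; ring
    _ ≤ Real.exp (-A) ^ n := by
        gcongr
        rw [hσt, div_le_iff₀ hn0, mul_comm]
        gcongr
    _ = Real.exp (-(n * A)) := by rw [← Real.exp_nat_mul]; congr 1; ring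
    _ ≤ Real.exp (-(2 * L)) := by
        refine Real.exp_le_exp.2 (neg_le_neg (htA.trans ?_))
        gcongr
    _ = (ε / 4) ^ 2 := by
        have : ε / 4 = Real.exp (-L) := by
          rw [hL, Real.exp_neg, Real.exp_log (by positivity), inv_div]
        rw [this, ← Real.exp_nat_mul]; congr 1; push_cast; ring

/-- This is `1 + v ≤ e^v` at `v = q log y - 1`. -/
lemma log_le_rpow {y q : ℝ} (hy : 0 < y) (hq : 0 < q) :
    Real.log y ≤ 1 / (Real.exp 1 * q) * y ^ q := by
  have h := Real.add_one_le_exp (q * Real.log y - 1)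
  rw [Real.exp_sub, mul_comm q, ← Real.rpow_def_of_pos hy] at h
  have : q * Real.log y ≤ y ^ q / Real.exp 1 := by linarith
  calc Real.log y = (q * Real.log y) / q := by field_simp
    _ ≤ (y ^ q / Real.exp 1) / q := by gcongr
    _ = _ := by field_simp

/-! ### Truncation and the covering number -/

/-- Cauchy–Schwarz, with bounds on the two factors. -/
lemma sum_abs_mul_le {ι : Type*} (F : Finset ι) (b e : ι → ℝ) {B δ : ℝ} (hB : 0 ≤ B) (hδ : 0 ≤ δ)
    (hb : ∑ k ∈ F, b k ^ 2 ≤ B ^ 2) (he : ∑ k ∈ F, e k ^ 2 ≤ δ ^ 2) :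
    ∑ k ∈ F, |b k * e k| ≤ B * δ := by
  have h := Finset.sum_mul_sq_le_sq_mul_sq F (fun k => |b k|) (fun k => |e k|)
  simp only [sq_abs, ← abs_mul] at h
  refine abs_le_of_sq_le_sq' (h.trans ?_) (by positivity) |>.2
  rw [mul_pow]
  gcongr

/-- The truncation `∑_{|k| ≤ m} b_k e_k^σ`, as a function on the ball. -/
noncomputable def lowDegreeSum (d m : ℕ) (σ : ℝ) (b : EuclideanSpace ℝ (lowDegree d m))
    (x : B2 d) : ℝ :=
  ∑ k : lowDegree d m, b k * ek d σ k x

lemma norm_le_one_of_mem_B2 {d : ℕ} (x : B2 d) : ‖(x : EuclideanSpace ℝ (Fin d))‖ ≤ 1 :=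
  mem_closedBall_zero_iff.1 x.2

lemma abs_lowDegreeSum_le (d m : ℕ) (σ : ℝ) (b : EuclideanSpace ℝ (lowDegree d m)) (x : B2 d) :
    |lowDegreeSum d m σ b x| ≤ ‖b‖ := by
  refine (Finset.abs_sum_le_sum_abs _ _).trans ?_
  have he : ∑ k : lowDegree d m, ek d σ k x ^ 2 ≤ 1 ^ 2 := by
    rw [Finset.sum_coe_sort (lowDegree d m) (fun k => ek d σ k x ^ 2)]
    simpa using sum_ek_sq_le d σ 0 (lowDegree d m) (fun _ _ => Nat.zero_le _) x
      (norm_le_one_of_mem_B2 x)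
  simpa using sum_abs_mul_le Finset.univ b (fun k => ek d σ k x) (norm_nonneg b) zero_le_one
    (EuclideanSpace.real_norm_sq_eq b).ge he

lemma lowDegreeSum_sub (d m : ℕ) (σ : ℝ) (b c : EuclideanSpace ℝ (lowDegree d m)) (x : B2 d) :
    lowDegreeSum d m σ c x - lowDegreeSum d m σ b x = lowDegreeSum d m σ (c - b) x := by
  simp only [lowDegreeSum, ← Finset.sum_sub_distrib, PiLp.sub_apply, sub_mul]

/-- Every function of the RKHS unit ball is within `δ` of a truncation to degree at most `m` whose
coefficient vector lies in the Euclidean unit ball. -/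
lemma exists_truncation (d m : ℕ) (σ : ℝ) {δ : ℝ} (hδ : 0 ≤ δ)
    (htail : (2 * σ ^ 2) ^ (m + 1) / ((m + 1).factorial : ℝ) ≤ δ ^ 2)
    {f : B2 d → ℝ} (hf : f ∈ UBall d σ (B2 d)) :
    ∃ c : EuclideanSpace ℝ (lowDegree d m), ‖c‖ ≤ 1 ∧
      ∀ x, |f x - lowDegreeSum d m σ c x| ≤ δ := by
  classical
  obtain ⟨a, hsum, hle, habs, hfx⟩ := hf
  have hfin : ∀ F : Finset (Fin d → ℕ), ∑ k ∈ F, a k ^ 2 ≤ 1 ^ 2 := fun F => by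
    rw [one_pow]
    exact (hsum.sum_le_tsum F fun _ _ => sq_nonneg _).trans hle
  refine ⟨WithLp.toLp 2 fun k => a k, ?_, fun x => ?_⟩
  · refine abs_le_of_sq_le_sq' ?_ zero_le_one |>.2
    rw [EuclideanSpace.real_norm_sq_eq]
    exact (Finset.sum_coe_sort (lowDegree d m) (fun k => a k ^ 2)).trans_le (hfin _)
  · have hs : Summable fun k => a k * ek d σ k x := (habs x).of_abs
    have hhead : lowDegreeSum d m σ (WithLp.toLp 2 fun k => a k) x =
        ∑ k ∈ lowDegree d m, a k * ek d σ k x :=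
      Finset.sum_coe_sort (lowDegree d m) (fun k => a k * ek d σ k x)
    rw [hfx, hhead, ← hs.sum_add_tsum_subtype_compl (lowDegree d m), add_sub_cancel_left]
    have hs' := (habs x).subtype {k | k ∉ lowDegree d m}
    refine (norm_tsum_le_tsum_norm (f := fun k : {k // k ∉ lowDegree d m} =>
      a k * ek d σ k x) hs').trans ?_
    refine hs'.tsum_le_of_sum_le fun (F : Finset {k // k ∉ lowDegree d m}) => ?_
    have h1 : ∑ k ∈ F, a k ^ 2 ≤ 1 ^ 2 := by
      have := hfin (F.map (Function.Embedding.subtype _))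
      rwa [Finset.sum_map] at this
    have h2 : ∑ k ∈ F, ek d σ k x ^ 2 ≤ δ ^ 2 := by
      have := sum_ek_sq_le d σ (m + 1) (F.map (Function.Embedding.subtype _)) ?_ x
        (norm_le_one_of_mem_B2 x)
      · rw [Finset.sum_map] at this
        exact this.trans htail
      · intro k hk
        obtain ⟨k', -, rfl⟩ := Finset.mem_map.1 hk
        exact not_le.1 fun h => k'.2 (mem_lowDegree.2 h)
    exact (sum_abs_mul_le F (fun k => a k) (fun k => ek d σ k x) zero_le_one hδ h1 h2).trans_eq
      (one_mul δ)

lemma covN_UBall_le (d m : ℕ) (σ : ℝ) {δ r ε : ℝ} (hδ : 0 ≤ δ) (hr : 0 < r) (hε : r + δ ≤ ε)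
    (htail : (2 * σ ^ 2) ^ (m + 1) / ((m + 1).factorial : ℝ) ≤ δ ^ 2) :
    (covN ε (UBall d σ (B2 d)) : ℝ) ≤ (1 + 2 / r) ^ (m + d).choose d := by
  obtain ⟨s, hcard, hs⟩ := exists_unitBall_cover (EuclideanSpace ℝ (lowDegree d m)) hr
  have hcov : covN ε (UBall d σ (B2 d)) ≤ s.card := by
    refine Nat.sInf_le ⟨fun i => lowDegreeSum d m σ (s.equivFin.symm i), fun i =>
      ⟨_, abs_lowDegreeSum_le d m σ _⟩, fun f hf => ?_⟩
    obtain ⟨c, hc, hfc⟩ := exists_truncation d m σ hδ htail hf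
    obtain ⟨b, hb, hcb⟩ := hs c hc
    refine ⟨s.equivFin ⟨b, hb⟩, fun x => ?_⟩
    simp only [Equiv.symm_apply_apply]
    have h := abs_lowDegreeSum_le d m σ (c - b) x
    rw [← lowDegreeSum_sub] at h
    have := abs_sub_le (f x) (lowDegreeSum d m σ c x) (lowDegreeSum d m σ b x)
    linarith [hfc x]
  calc (covN ε (UBall d σ (B2 d)) : ℝ) ≤ s.card := by exact_mod_cast hcov
    _ ≤ _ := hcard
    _ ≤ _ := by
      refine pow_le_pow_right₀ (by linarith [div_pos two_pos hr]) ?_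
      rw [finrank_euclideanSpace, Fintype.card_coe]
      exact card_lowDegree_le d m

/-! ### The entropy bound -/

theorem log_covN_UBall_le_poly (d : ℕ) (hd : 1 ≤ d) (σ : ℝ) (hσ : 0 < σ)
    (p : ℝ) (hp : 0 < p)
    (w : ℝ) (hwpos : 0 < w) (hw : w * Real.exp w = ((d : ℝ) + 1) / (p * σ ^ 2))
    (t₀ : ℝ)
    (ht₀ : t₀ = 2 * ((d : ℝ) + 1) * (4 : ℝ) ^ (p / ((d : ℝ) + 1)) /
      (Real.exp 1 * p * w) * Real.exp (1 / w)) :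
    ∀ ε : ℝ, 0 < ε → ε ≤ 1 →
      Real.log (covN ε (UBall d σ (B2 d))) ≤
        gbinom t₀ d * (((d : ℝ) + 1) / (Real.exp 1 * p)) *
          (4 : ℝ) ^ (p / ((d : ℝ) + 1)) * ε ^ (-p) := by
  intro ε hε hε1
  set q : ℝ := p / ((d : ℝ) + 1) with hq
  have hd0 : (0 : ℝ) < (d : ℝ) + 1 := by positivity
  have hq0 : 0 < q := by positivity
  have hpq : p = q * ((d : ℝ) + 1) := by rw [hq]; field_simp
  have hwq : w * Real.exp w = 1 / (q * σ ^ 2) := by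
    rw [hw, hpq]; field_simp
  have hεq : (4 / ε) ^ q = 4 ^ q * ε ^ (-q) := by
    rw [Real.div_rpow (by norm_num) hε.le, Real.rpow_neg hε.le, div_eq_mul_inv]
  have ht : t₀ * ε ^ (-q) = 2 / (q * w) * Real.exp (1 / w - 1) * (4 / ε) ^ q := by
    rw [hεq, ht₀, hpq, Real.exp_sub]
    field_simp
  have ht₀pos : 0 < t₀ := by rw [ht₀]; positivity
  have hc : 1 ≤ ε ^ (-q) := Real.one_le_rpow_of_pos_of_le_one_of_nonpos hε hε1 (by linarith)
  set t := t₀ * ε ^ (-q) with ht_def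
  have htpos : 0 < t := by positivity
  set m := ⌊t⌋₊ with hm
  have htail := tail_le hσ hq0 hwpos hwq hε hε1 ht (m + 1) (by
    push_cast; exact (Nat.lt_floor_add_one t).le)
  have hcov := covN_UBall_le d m σ (δ := ε / 4) (r := 3 * ε / 4) (ε := ε) (by positivity)
    (by positivity) (by linarith) htail
  -- `1 + 2 / r ≤ 3 / r = 4 / ε` because `r = 3ε/4 ≤ 1`.
  have hbase : 1 + 2 / (3 * ε / 4) ≤ 4 / ε := by
    have : 4 / ε - (1 + 2 / (3 * ε / 4)) = (4 / 3 - ε) / ε := by field_simp; ring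
    have : 0 ≤ (4 / 3 - ε) / ε := div_nonneg (by linarith) hε.le
    linarith
  have h4 : 1 ≤ 4 / ε := by rw [le_div_iff₀ hε]; linarith
  have hL0 : 0 ≤ Real.log (4 / ε) := Real.log_nonneg h4
  have hlog : Real.log (covN ε (UBall d σ (B2 d))) ≤
      ((m + d).choose d : ℝ) * Real.log (4 / ε) := by
    -- `covN` may be `0` when no finite cover exists, and `log 0 = 0` obeys the bound as well.
    rcases Nat.eq_zero_or_pos (covN ε (UBall d σ (B2 d))) with h0 | h0
    · rw [h0, Nat.cast_zero, Real.log_zero]; positivity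
    · rw [← Real.log_pow]
      exact Real.log_le_log (by exact_mod_cast h0)
        (hcov.trans (pow_le_pow_left₀ (by positivity) hbase _))
  have hbin : ((m + d).choose d : ℝ) ≤ gbinom t₀ d * (ε ^ (-q)) ^ d := by
    rw [← gbinom_natCast]
    exact (gbinom_mono (by positivity) (Nat.floor_le htpos.le) d).trans
      (gbinom_mul_le hc ht₀pos.le d)
  have hg0 : 0 ≤ gbinom t₀ d := by unfold gbinom; positivity
  have hpow : (ε ^ (-q)) ^ d * ε ^ (-q) = ε ^ (-p) := by
    rw [← pow_succ, ← Real.rpow_mul_natCast hε.le, hpq]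
    congr 1
    push_cast
    ring
  have hcoef : 1 / (Real.exp 1 * q) = ((d : ℝ) + 1) / (Real.exp 1 * p) := by
    rw [hpq]; field_simp
  calc Real.log (covN ε (UBall d σ (B2 d)))
      ≤ ((m + d).choose d : ℝ) * Real.log (4 / ε) := hlog
    _ ≤ (gbinom t₀ d * (ε ^ (-q)) ^ d) * (1 / (Real.exp 1 * q) * (4 / ε) ^ q) := by
        gcongr
        exact log_le_rpow (by positivity) hq0
    _ = gbinom t₀ d * (1 / (Real.exp 1 * q)) * 4 ^ q * ((ε ^ (-q)) ^ d * ε ^ (-q)) := by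
        rw [hεq]; ring
    _ = _ := by rw [hpow, hcoef]
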